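/- Let p be a prime and m ≥ 1 an integer. The p-adic density, within the set of all monic binary forms of degree 2m over ℤ_p (identified with their coefficient vectors in ℤ_p^{2m}), of the subset of forms H such that R_H is maximal and the reduction of H modulo p is the square of a binary form over F_p, equals p^{-m}·(1 - p^{-1}). -/

import Mathlib

open Polynomial Matrix MeasureTheory
open scoped Classical
noncomputable section
namespace BHS



/-! ### Binary forms and the rings they cut out, over a general base -/

variable (R K : Type) [CommRing R] [Field K] [Algebra R K]

/-- The one-variable polynomial `F(x,1)` of the binary form of degree `n` with
coefficient vector `c` (so `F(x,z) = ∑ c i · x^(n-i) · z^i`), over `K`. -/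
def binPoly (n : ℕ) (c : ℕ → R) : Polynomial K :=
  ∑ i ∈ Finset.range (n + 1), Polynomial.C (algebraMap R K (c i)) * Polynomial.X ^ (n - i)

/-- The étale algebra `K_F = K[x]/(F(x,1))`. -/
abbrev KF (n : ℕ) (c : ℕ → R) : Type := AdjoinRoot (binPoly R K n c)

/-- θ, the image of x in K_F. -/
def θF (n : ℕ) (c : ℕ → R) : KF R K n c := AdjoinRoot.root _

/-- `ζ_i = ∑_{j<i} f_j θ^{i-j}`. -/
def ζF (n : ℕ) (c : ℕ → R) (i : ℕ) : KF R K n c :=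
  ∑ j ∈ Finset.range i, algebraMap R (KF R K n c) (c j) * θF R K n c ^ (i - j)

/-- The ring `R_F`, as the free `R`-submodule of `K_F` with basis `1, ζ_1, …, ζ_{n-1}`
(a subring by Nakagawa's theorem). -/
def RFmod (n : ℕ) (c : ℕ → R) : Submodule R (KF R K n c) :=
  Submodule.span R ({1} ∪ {x | ∃ i, 1 ≤ i ∧ i ≤ n - 1 ∧ x = ζF R K n c i})

/-- The fractional ideal `I_F^k`, as the free `R`-submodule of `K_F` with basis
`1, θ, …, θ^k, ζ_{k+1}, …, ζ_{n-1}`. -/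
def IFmod (n : ℕ) (c : ℕ → R) (k : ℕ) : Submodule R (KF R K n c) :=
  Submodule.span R ({x | ∃ j ≤ k, x = θF R K n c ^ j} ∪
    {x | ∃ i, k + 1 ≤ i ∧ i ≤ n - 1 ∧ x = ζF R K n c i})

/-- `R_F` is the maximal order (the integral closure of `R`) in `K_F`. -/
def IsMaxOrder (n : ℕ) (c : ℕ → R) : Prop :=
  RFmod R K n c = Subalgebra.toSubmodule (integralClosure R (KF R K n c))

/-- `M` is stable under multiplication by `R_F`, i.e. `M` is an `R_F`-submodule of `K_F`. -/
def IsStable (n : ℕ) (c : ℕ → R) (M : Submodule R (KF R K n c)) : Prop :=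
  ∀ ρ ∈ RFmod R K n c, ∀ x ∈ M, ρ * x ∈ M

/-- `M` is an invertible fractional ideal of `R_F`. -/
def IsInvIdeal (n : ℕ) (c : ℕ → R) (M : Submodule R (KF R K n c)) : Prop :=
  IsStable R K n c M ∧
    ∃ N : Submodule R (KF R K n c), IsStable R K n c N ∧ M * N = RFmod R K n c

/-- The principal fractional ideal of `R_F` generated by `α`. -/
def principal (n : ℕ) (c : ℕ → R) (α : KF R K n c) : Submodule R (KF R K n c) :=
  Submodule.span R {α} * RFmod R K n c

/-- `ρ` is a unit of the order `R_F`. -/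
def IsUnitRF (n : ℕ) (c : ℕ → R) (ρ : KF R K n c) : Prop :=
  ρ ∈ RFmod R K n c ∧ ∃ σ ∈ RFmod R K n c, ρ * σ = 1

/-- `#R_F^×[2]`, the number of 2-torsion units of `R_F`. -/
def twoTorsUnitsCount (n : ℕ) (c : ℕ → R) : ℕ :=
  Nat.card {ρ : KF R K n c // ρ ∈ RFmod R K n c ∧ ρ ^ 2 = 1}

/-- The number of 2-torsion elements of the ideal class group `Cl(R_F)`: the number of
invertible fractional ideals of `R_F` whose square is principal, counted modulo
principal fractional ideals. -/
def clTwoCount (n : ℕ) (c : ℕ → R) : ℕ :=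
  Nat.card (Quot (fun (I J : {M : Submodule R (KF R K n c) //
      IsInvIdeal R K n c M ∧
        ∃ α : KF R K n c, IsUnit α ∧ M * M = principal R K n c α}) =>
    ∃ α : KF R K n c, IsUnit α ∧
      (I : Submodule R (KF R K n c)) =
        Submodule.span R {α} * (J : Submodule R (KF R K n c))))

/-- `α ∈ K_F` is totally positive: positive under every real embedding. -/
def TotPos (n : ℕ) (c : ℕ → R) (α : KF R K n c) : Prop :=
  ∀ φ : KF R K n c →+* ℝ, 0 < φ α

/-- The number of 2-torsion elements of the narrow class group `Cl⁺(R_F)`. -/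
def clTwoCountPlus (n : ℕ) (c : ℕ → R) : ℕ :=
  Nat.card (Quot (fun (I J : {M : Submodule R (KF R K n c) //
      IsInvIdeal R K n c M ∧
        ∃ α : KF R K n c, IsUnit α ∧ TotPos R K n c α ∧ M * M = principal R K n c α}) =>
    ∃ α : KF R K n c, IsUnit α ∧ TotPos R K n c α ∧
      (I : Submodule R (KF R K n c)) =
        Submodule.span R {α} * (J : Submodule R (KF R K n c))))

/-- The order of the ideal class group of `R_F`. -/
def clCount (n : ℕ) (c : ℕ → R) : ℕ :=
  Nat.card (Quot (fun (I J : {M : Submodule R (KF R K n c) // IsInvIdeal R K n c M}) =>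
    ∃ α : KF R K n c, IsUnit α ∧
      (I : Submodule R (KF R K n c)) =
        Submodule.span R {α} * (J : Submodule R (KF R K n c))))

/-- The order of the narrow class group of `R_F`. -/
def clCountPlus (n : ℕ) (c : ℕ → R) : ℕ :=
  Nat.card (Quot (fun (I J : {M : Submodule R (KF R K n c) // IsInvIdeal R K n c M}) =>
    ∃ α : KF R K n c, IsUnit α ∧ TotPos R K n c α ∧
      (I : Submodule R (KF R K n c)) =
        Submodule.span R {α} * (J : Submodule R (KF R K n c))))




/-! ### p-adic machinery -/

variable (p : ℕ) [Fact p.Prime]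

instance : MeasurableSpace ℤ_[p] := borel _
instance : BorelSpace ℤ_[p] := ⟨rfl⟩

/-- Haar probability measure on `ℤ_p^n`. -/
def haarP (n : ℕ) : Measure (Fin n → ℤ_[p]) :=
  Measure.addHaarMeasure ⟨⟨Set.univ, isCompact_univ⟩, by rw [interior_univ]; exact Set.univ_nonempty⟩

/-- The `p`-adic density of `A` within `B` (subsets of the coefficient space `ℤ_p^n`). -/
def densIn (n : ℕ) (A B : Set (Fin n → ℤ_[p])) : ℝ :=
  (haarP p n A).toReal / (haarP p n B).toReal

/-- The coefficient vector of the degree-`n` binary form with leading coefficient `f0` and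
remaining coefficients `v`. -/
def consF0 (n : ℕ) (f0 : ℤ_[p]) (v : Fin n → ℤ_[p]) : ℕ → ℤ_[p] :=
  fun j => if j = 0 then f0 else if h : j - 1 < n then v ⟨j - 1, h⟩ else 0

/-- The reduction of the binary form with coefficients `c` modulo `p`, as a polynomial in
two variables `x = X 0`, `z = X 1` over `F_p`. -/
def redForm (n : ℕ) (c : ℕ → ℤ_[p]) : MvPolynomial (Fin 2) (ZMod p) :=
  ∑ i ∈ Finset.range (n + 1),
    MvPolynomial.C (PadicInt.toZMod (c i)) * MvPolynomial.X 0 ^ (n - i) * MvPolynomial.X 1 ^ i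

/-- `F` is squareful over `ℤ_p`: `F ≡ κ·z^{e}·H² (mod p)` with `e > 0`, `κ ∈ F_p^×` and
`H` a monic binary form over `F_p` (hence not divisible by `z`). -/
def SquarefulP (n : ℕ) (c : ℕ → ℤ_[p]) : Prop :=
  ∃ (κ : (ZMod p)ˣ) (e d : ℕ) (H : MvPolynomial (Fin 2) (ZMod p)),
    0 < e ∧ H.IsHomogeneous d ∧ MvPolynomial.coeff (Finsupp.single 0 d) H = 1 ∧
    redForm p n c = MvPolynomial.C (κ : ZMod p) * MvPolynomial.X 1 ^ e * H ^ 2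

/-- `F` is evenly ramified over `ℤ_p`: `F ≡ κ·H² (mod p)` with `κ ∈ F_p^×`. -/
def EvenRamP (n : ℕ) (c : ℕ → ℤ_[p]) : Prop :=
  ∃ (κ : (ZMod p)ˣ) (H : MvPolynomial (Fin 2) (ZMod p)),
    redForm p n c = MvPolynomial.C (κ : ZMod p) * H ^ 2

/-- `F` is primitive over `ℤ_p`: its coefficients generate the unit ideal. -/
def PrimP (n : ℕ) (c : ℕ → ℤ_[p]) : Prop := ∃ i ≤ n, IsUnit (c i)

/-- `F` is separable (of degree `n`) over `ℚ_p`. -/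
def SepDegP (n : ℕ) (c : ℕ → ℤ_[p]) : Prop :=
  (binPoly ℤ_[p] ℚ_[p] n c).Separable ∧ (binPoly ℤ_[p] ℚ_[p] n c).natDegree = n

/-- The determinant of the Sylvester matrix of `F(x,1)` (of formal degree n) and
`F'(x,1)` (of formal degree n-1); it equals `±f_0` times the discriminant of the form. -/
def sylvDet (S : Type) [CommRing S] (n : ℕ) (c : ℕ → S) : S :=
  Matrix.det (Matrix.of (fun (i j : Fin (n + (n - 1))) =>
    if (i : ℕ) < n - 1 then
      (if (i : ℕ) ≤ (j : ℕ) ∧ (j : ℕ) ≤ (i : ℕ) + n then c ((j : ℕ) - (i : ℕ)) else 0)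
    else
      (if (i : ℕ) - (n - 1) ≤ (j : ℕ) ∧ (j : ℕ) ≤ ((i : ℕ) - (n - 1)) + (n - 1) then
        ((n - ((j : ℕ) - ((i : ℕ) - (n - 1))) : ℕ) : S) * c ((j : ℕ) - ((i : ℕ) - (n - 1)))
      else 0)))

/-- The discriminant of the form with coefficients `c` is not divisible by `p²`. -/
def DiscOK (n : ℕ) (c : ℕ → ℤ_[p]) : Prop :=
  ¬ ((p : ℤ_[p]) ^ 2 * c 0 ∣ sylvDet ℤ_[p] n c)

/-- The reduction modulo `p` of the degree-`n` binary form with coefficients `c` is a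
separable binary form over `F_p`. -/
def SepFormModP (n : ℕ) (c : ℕ → ℤ_[p]) : Prop :=
  (∑ i ∈ Finset.range (n + 1),
      Polynomial.C (PadicInt.toZMod (c i)) * (Polynomial.X : Polynomial (ZMod p)) ^ (n - i)).Separable ∧
  n - 1 ≤ (∑ i ∈ Finset.range (n + 1),
      Polynomial.C (PadicInt.toZMod (c i)) * (Polynomial.X : Polynomial (ZMod p)) ^ (n - i)).natDegree



section dede
variable {p : ℕ} [Fact p.Prime]

lemma exists_of_map_zero (P : ℤ_[p][X]) (h : P.map PadicInt.toZMod = 0) :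
    ∃ Q : ℤ_[p][X], P = (p : ℤ_[p][X]) * Q := by
  have : (C (p : ℤ_[p])) ∣ P := by
    rw [C_dvd_iff_dvd_coeff]
    intro i
    have h1 : PadicInt.toZMod (P.coeff i) = 0 := by
      rw [← coeff_map, h, coeff_zero]
    rw [← RingHom.mem_ker, PadicInt.ker_toZMod, PadicInt.maximalIdeal_eq_span_p,
      Ideal.mem_span_singleton] at h1
    exact h1
  obtain ⟨Q, hQ⟩ := this
  exact ⟨Q, by simpa using hQ⟩

lemma exists_of_map_eq (P P' : ℤ_[p][X]) (h : P.map PadicInt.toZMod = P'.map PadicInt.toZMod) :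
    ∃ Q : ℤ_[p][X], P = P' + (p : ℤ_[p][X]) * Q := by
  obtain ⟨Q, hQ⟩ := exists_of_map_zero (P - P') (by simp [h])
  exact ⟨Q, by rw [← hQ]; ring⟩

lemma toZMod_surj : Function.Surjective (PadicInt.toZMod : ℤ_[p] →+* ZMod p) :=
  ZMod.ringHom_surjective _

lemma exists_lift (P : (ZMod p)[X]) : ∃ Q : ℤ_[p][X], Q.map PadicInt.toZMod = P :=
  Polynomial.map_surjective _ toZMod_surj P

lemma unit_one_add (f : ℤ_[p][X]) (hf : f.Monic) (c : AdjoinRoot f) :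
    IsUnit (1 + (p : AdjoinRoot f) * c) := by
  by_contra hu
  obtain ⟨M, hM, hmem⟩ := exists_max_ideal_of_mem_nonunits hu
  have : Module.Finite ℤ_[p] (AdjoinRoot f) := hf.finite_adjoinRoot
  have h1 : (M.comap (algebraMap ℤ_[p] (AdjoinRoot f))).IsMaximal :=
    Ideal.isMaximal_comap_of_isIntegral_of_isMaximal M
  have h2 := IsLocalRing.eq_maximalIdeal h1
  have h3 : (p : ℤ_[p]) ∈ M.comap (algebraMap ℤ_[p] (AdjoinRoot f)) := by
    rw [h2, PadicInt.maximalIdeal_eq_span_p]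
    exact Ideal.mem_span_singleton_self _
  rw [Ideal.mem_comap, map_natCast] at h3
  have h4 : (1 : AdjoinRoot f) ∈ M := by
    have := M.sub_mem hmem (M.mul_mem_right c h3)
    simpa using this
  exact hM.ne_top ((Ideal.eq_top_iff_one M).2 h4)

/-- divisibility of powers descends along integral elements. -/
lemma integral_descent {R A K : Type*} [CommRing R] [CommRing A] [CommRing K] [Algebra R A]
    [Algebra R K] (ι : A →ₐ[R] K) (hι : Function.Injective ι) (s : A) (hs : IsRadical s)
    (hu : IsUnit (ι s)) (k : ℕ) :
    ∀ x : K, IsIntegral R x → ι s ^ k * x ∈ Set.range ι → x ∈ Set.range ι := by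
  induction k with
  | zero => intro x _ h; simpa using h
  | succ k ih =>
    intro x hx h
    apply ih x hx
    obtain ⟨c, hc⟩ := h
    -- y = s^k x satisfies integral equation with coefficients in A
    set y := ι s ^ k * x with hy
    have hcy : ι c = ι s * y := by rw [hc, hy]; ring
    let _ : Algebra A K := ι.toRingHom.toAlgebra
    have : IsScalarTower R A K := IsScalarTower.of_algebraMap_eq (fun r => (ι.commutes r).symm)
    have hyint : IsIntegral A y := by
      have h1 : IsIntegral A x := hx.tower_top
      exact ((isIntegral_algebraMap (R := A) (x := s)).pow k).mul h1
    obtain ⟨P, hP, hPy⟩ := hyint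
    have hsd : s ∣ c ^ P.natDegree := by
      have h2 := Polynomial.scaleRoots_eval₂_eq_zero (algebraMap A K) (r := y) (s := s) hPy
      have h3 : algebraMap A K s * y = algebraMap A K c := hcy.symm
      rw [h3, Polynomial.eval₂_at_apply] at h2
      have h4 : (P.scaleRoots s).eval c = 0 := hι (by rw [map_zero]; exact h2)
      rw [Polynomial.eval_eq_sum_range, natDegree_scaleRoots, Finset.sum_range_succ,
        coeff_scaleRoots_natDegree, hP.leadingCoeff, one_mul] at h4
      rw [eq_neg_of_add_eq_zero_right h4, dvd_neg]
      apply Finset.dvd_sum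
      intro i hi
      rw [coeff_scaleRoots]
      have : P.natDegree - i ≠ 0 := by have := Finset.mem_range.1 hi; omega
      exact Dvd.dvd.mul_right (Dvd.dvd.mul_left (dvd_pow_self s this) _) _
    obtain ⟨d, hd⟩ := hs _ _ hsd
    refine ⟨d, ?_⟩
    apply hu.mul_left_cancel
    rw [← hcy, hd, map_mul]

lemma dedekind_mp_aux (f g h : ℤ_[p][X]) (hf : f.Monic) (hfg : f = g ^ 2 + (p : ℤ_[p][X]) * h)
    (hg0 : g.map PadicInt.toZMod ≠ 0)
    (hc : IsCoprime (g.map PadicInt.toZMod) (h.map PadicInt.toZMod)) :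
    ∃ s : AdjoinRoot f, IsRadical s ∧ s ∣ (p : AdjoinRoot f) ∧ ∃ k, (p : AdjoinRoot f) ∣ s ^ k := by
  have hmkf : AdjoinRoot.mk f g ^ 2 + (p : AdjoinRoot f) * AdjoinRoot.mk f h = 0 := by
    have h1 : AdjoinRoot.mk f (g ^ 2 + (p : ℤ_[p][X]) * h) = 0 :=
      AdjoinRoot.mk_eq_zero.2 (by rw [← hfg])
    simpa using h1
  have hpmap : ((p : ℤ_[p][X])).map (PadicInt.toZMod : ℤ_[p] →+* ZMod p) = 0 := by
    simp
  have hhu : IsUnit (AdjoinRoot.mk f h) := by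
    obtain ⟨a, b, hab⟩ := hc.pow_left (m := 2)
    obtain ⟨a, rfl⟩ := exists_lift a
    obtain ⟨b, rfl⟩ := exists_lift b
    obtain ⟨c, hc⟩ := exists_of_map_eq (a * g ^ 2 + b * h) 1 (by simpa using hab)
    have h1 := congrArg (AdjoinRoot.mk f) hc
    simp only [map_add, map_mul, map_pow, map_one, map_natCast] at h1
    have h2 := unit_one_add f hf (AdjoinRoot.mk f c)
    rw [← h1] at h2
    have h3 : AdjoinRoot.mk f h * (AdjoinRoot.mk f b - p * AdjoinRoot.mk f a) =
      AdjoinRoot.mk f a * AdjoinRoot.mk f g ^ 2 + AdjoinRoot.mk f b * AdjoinRoot.mk f h := by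
      linear_combination (- AdjoinRoot.mk f a) * hmkf
    rw [← h3] at h2
    exact isUnit_of_mul_isUnit_left h2
  obtain ⟨u, hu⟩ := hhu.exists_right_inv
  set γ := AdjoinRoot.mk f g with hγ
  have hpu : (p : AdjoinRoot f) = - u * γ ^ 2 := by
    linear_combination (-(p : AdjoinRoot f)) * hu + u * hmkf
  set S := UniqueFactorizationMonoid.radical (g.map PadicInt.toZMod) with hS
  obtain ⟨s, hs⟩ := exists_lift S
  have hSr : IsRadical S := by
    rw [isRadical_iff_squarefree_of_ne_zero UniqueFactorizationMonoid.radical_ne_zero]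
    exact UniqueFactorizationMonoid.squarefree_radical
  have hSG : S ∣ g.map PadicInt.toZMod := UniqueFactorizationMonoid.radical_dvd_self
  have hsγ : AdjoinRoot.mk f s ∣ γ := by
    obtain ⟨T, hT⟩ := hSG
    obtain ⟨t, rfl⟩ := exists_lift T
    obtain ⟨w, hw⟩ := exists_of_map_eq g (s * t) (by rw [hT, Polynomial.map_mul, hs])
    have h1 := congrArg (AdjoinRoot.mk f) hw
    simp only [map_add, map_mul, map_natCast] at h1
    rw [← hγ] at h1
    set ω := AdjoinRoot.mk f w
    have h2 := unit_one_add f hf (u * ω ^ 2)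
    have h3 : 1 + (p : AdjoinRoot f) * (u * ω ^ 2) = (1 + u * γ * ω) * (1 - u * γ * ω) := by
      linear_combination (u * ω ^ 2) * hpu
    rw [h3] at h2
    have h4 := isUnit_of_mul_isUnit_left h2
    rw [← h4.dvd_mul_right]
    exact ⟨AdjoinRoot.mk f t, by linear_combination h1 + ω * hpu⟩
  have hsp : AdjoinRoot.mk f s ∣ (p : AdjoinRoot f) := by
    rw [hpu, pow_two]
    exact ((hsγ.mul_right _).mul_left _)
  refine ⟨AdjoinRoot.mk f s, ?_, hsp, ?_⟩
  · intro n a ha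
    obtain ⟨P, rfl⟩ := AdjoinRoot.mk_surjective a
    obtain ⟨b, hb⟩ := ha
    obtain ⟨Q, rfl⟩ := AdjoinRoot.mk_surjective b
    rw [← map_pow, ← map_mul, AdjoinRoot.mk_eq_mk] at hb
    obtain ⟨Z, hZ⟩ := hb
    have h1 : P ^ n = s * Q + f * Z := by rw [← hZ]; ring
    have h2 := congrArg (Polynomial.map (PadicInt.toZMod : ℤ_[p] →+* ZMod p)) h1
    have h3 : S ∣ (P.map PadicInt.toZMod) ^ n := by
      rw [← Polynomial.map_pow, h2, Polynomial.map_add, Polynomial.map_mul, Polynomial.map_mul, hs]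
      apply dvd_add (dvd_mul_right _ _)
      rw [hfg, Polynomial.map_add, Polynomial.map_mul, hpmap, zero_mul, add_zero,
        Polynomial.map_pow, pow_two]
      exact (hSG.mul_right _).mul_right _
    obtain ⟨T, hT⟩ := hSr _ _ h3
    obtain ⟨t, rfl⟩ := exists_lift T
    obtain ⟨w, hw⟩ := exists_of_map_eq P (s * t) (by rw [hT, Polynomial.map_mul, hs])
    rw [hw, map_add, map_mul, map_mul, map_natCast]
    exact dvd_add (dvd_mul_right _ _) (hsp.mul_right _)
  · obtain ⟨k, T, hT⟩ := UniqueFactorizationMonoid.exists_dvd_radical_self_pow hg0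
    obtain ⟨t, rfl⟩ := exists_lift T
    obtain ⟨w, hw⟩ := exists_of_map_eq (s ^ k) (g * t) (by
      rw [Polynomial.map_mul, Polynomial.map_pow, hs, hT])
    have h1 := congrArg (AdjoinRoot.mk f) hw
    simp only [map_add, map_mul, map_natCast, map_pow] at h1
    refine ⟨k * 2, ?_⟩
    have h2 : γ ∣ AdjoinRoot.mk f s ^ k := by
      rw [h1, hpu]
      exact dvd_add (dvd_mul_right _ _) ⟨-u * γ * AdjoinRoot.mk f w, by ring⟩
    have h3 : (p : AdjoinRoot f) ∣ γ ^ 2 := ⟨- AdjoinRoot.mk f h, by linear_combination hmkf⟩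
    rw [pow_mul]
    exact h3.trans (pow_dvd_pow_of_dvd h2 2)

/-- Dedekind criterion, sufficiency. -/
lemma dedekind_mp {K : Type*} [CommRing K] [Algebra ℤ_[p] K] (θ : K)
    (f g h : ℤ_[p][X]) (hf : f.Monic) (hfg : f = g ^ 2 + (p : ℤ_[p][X]) * h)
    (hg0 : g.map PadicInt.toZMod ≠ 0)
    (hker : ∀ P : ℤ_[p][X], aeval θ P = 0 ↔ f ∣ P)
    (hpu : IsUnit (p : K))
    (hden : ∀ x : K, ∃ k : ℕ, ∃ P : ℤ_[p][X], (p : K) ^ k * x = aeval θ P)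
    (hc : IsCoprime (g.map PadicInt.toZMod) (h.map PadicInt.toZMod)) (x : K)
    (hx : IsIntegral ℤ_[p] x) : ∃ P : ℤ_[p][X], x = aeval θ P := by
  obtain ⟨s, hs, hsp, k, hk⟩ := dedekind_mp_aux f g h hf hfg hg0 hc
  have hθ : aeval θ f = 0 := (hker f).2 dvd_rfl
  let ι : AdjoinRoot f →ₐ[ℤ_[p]] K := AdjoinRoot.liftAlgHom f (Algebra.ofId _ _) θ hθ
  have hιmk : ∀ P, ι (AdjoinRoot.mk f P) = aeval θ P := by
    intro P
    rfl
  have hι : Function.Injective ι := by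
    rw [injective_iff_map_eq_zero]
    intro a ha
    obtain ⟨P, rfl⟩ := AdjoinRoot.mk_surjective a
    rw [hιmk, hker] at ha
    exact AdjoinRoot.mk_eq_zero.2 ha
  have hsu : IsUnit (ι s) := by
    obtain ⟨t, ht⟩ := hsp
    have := congrArg ι ht
    rw [map_natCast, map_mul] at this
    rw [this] at hpu
    exact isUnit_of_mul_isUnit_left hpu
  obtain ⟨l, P, hl⟩ := hden x
  obtain ⟨t, ht⟩ := hk
  have := integral_descent ι hι s hs hsu (k * l) x hx ⟨t ^ l * AdjoinRoot.mk f P, by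
    rw [map_mul, hιmk, ← hl, ← map_pow, pow_mul, ht, mul_pow]
    simp only [map_mul, map_pow, map_natCast]
    ring⟩
  obtain ⟨a, rfl⟩ := this
  obtain ⟨P, rfl⟩ := AdjoinRoot.mk_surjective a
  exact ⟨P, hιmk P⟩

lemma exists_monic_lift (P : (ZMod p)[X]) (hP : P.Monic) :
    ∃ Q : ℤ_[p][X], Q.map PadicInt.toZMod = P ∧ Q.natDegree = P.natDegree ∧ Q.Monic :=
  Polynomial.lifts_and_natDegree_eq_and_monic
    (Polynomial.mem_lifts_of_surjective toZMod_surj P) hP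

/-- Dedekind criterion, necessity. -/
lemma dedekind_mpr {K : Type*} [CommRing K] [Algebra ℤ_[p] K] (θ : K)
    (f g h : ℤ_[p][X]) (hf : f.Monic) (hfg : f = g ^ 2 + (p : ℤ_[p][X]) * h)
    (hg : g.Monic) (hdeg : f.natDegree = 2 * g.natDegree)
    (hker : ∀ P : ℤ_[p][X], aeval θ P = 0 ↔ f ∣ P)
    (hpu : IsUnit (p : K))
    (hmax : ∀ x : K, IsIntegral ℤ_[p] x → ∃ P : ℤ_[p][X], x = aeval θ P) :
    IsCoprime (g.map PadicInt.toZMod) (h.map PadicInt.toZMod) := by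
  by_contra hcop
  have hGm : (g.map (PadicInt.toZMod : ℤ_[p] →+* ZMod p)).Monic := hg.map _
  have hGd : (g.map (PadicInt.toZMod : ℤ_[p] →+* ZMod p)).natDegree = g.natDegree :=
    hg.natDegree_map _
  set G := g.map (PadicInt.toZMod : ℤ_[p] →+* ZMod p) with hG
  set H := h.map (PadicInt.toZMod : ℤ_[p] →+* ZMod p) with hH
  -- a monic common factor
  obtain ⟨D, hDm, hD0, hDG, hDH⟩ : ∃ D : (ZMod p)[X], D.Monic ∧ 0 < D.natDegree ∧ D ∣ G ∧ D ∣ H := by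
    have hne : EuclideanDomain.gcd G H ≠ 0 := by
      intro h0
      exact hGm.ne_zero (EuclideanDomain.gcd_eq_zero_iff.1 h0).1
    have hnu : ¬ IsUnit (EuclideanDomain.gcd G H) := by
      rwa [EuclideanDomain.gcd_isUnit_iff]
    refine ⟨normalize (EuclideanDomain.gcd G H), monic_normalize hne, ?_, ?_, ?_⟩
    · rw [natDegree_pos_iff_degree_pos, degree_normalize]
      exact degree_pos_of_ne_zero_of_nonunit hne hnu
    · exact normalize_dvd_iff.2 (EuclideanDomain.gcd_dvd_left _ _)
    · exact normalize_dvd_iff.2 (EuclideanDomain.gcd_dvd_right _ _)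
  obtain ⟨E, hE⟩ := hDG
  obtain ⟨J, hJ⟩ := hDH
  have hEm : E.Monic := hDm.of_mul_monic_left (hE ▸ hGm)
  obtain ⟨e, heE, hed, hem⟩ := exists_monic_lift E hEm
  obtain ⟨d, hd⟩ := exists_lift D
  obtain ⟨j, hj⟩ := exists_lift J
  obtain ⟨k, hk⟩ := exists_of_map_eq (d * e) g (by rw [Polynomial.map_mul, hd, heE, ← hE])
  obtain ⟨l, hl⟩ := exists_of_map_eq h (d * j) (by rw [Polynomial.map_mul, hd, hj, ← hJ])
  have hEd : e.natDegree < g.natDegree := by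
    have := hDm.natDegree_mul hEm
    rw [← hE, hGd] at this
    omega
  obtain ⟨q, hq⟩ := hpu.exists_right_inv
  have hθ : aeval θ f = 0 := (hker f).2 dvd_rfl
  have hθint : IsIntegral ℤ_[p] θ := ⟨f, hf, hθ⟩
  have hint : ∀ P : ℤ_[p][X], IsIntegral ℤ_[p] (aeval θ P) := fun P => by
      have : aeval θ P ∈ integralClosure ℤ_[p] K := by
        rw [aeval_eq_sum_range]
        exact Subalgebra.sum_mem _ fun i _ => Subalgebra.smul_mem _ (Subalgebra.pow_mem _ hθint _) _
      exact this
  have hfg' := congrArg (aeval θ) hfg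
  have hk' := congrArg (aeval θ) hk
  have hl' := congrArg (aeval θ) hl
  simp only [map_add, map_mul, map_pow, map_natCast, hθ] at hfg' hk' hl'
  set g' := aeval θ g
  set e' := aeval θ e with he'
  set d' := aeval θ d
  set j' := aeval θ j with hj'
  set k' := aeval θ k with hk''
  set l' := aeval θ l with hl''
  set h' := aeval θ h
  have hα : IsIntegral ℤ_[p] (q * (e' * g')) := by
    have hrel : (q * (e' * g')) ^ 2 + j' * (q * (e' * g')) + (e' * k' * j' + e' ^ 2 * l') = 0 := by
      have e1 : g' ^ 2 = - (p : K) * h' := by linear_combination -hfg'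
      have e2 : (q * (e' * g')) ^ 2 = - q * e' ^ 2 * h' := by
        calc (q * (e' * g')) ^ 2 = q ^ 2 * e' ^ 2 * g' ^ 2 := by ring
          _ = _ := by rw [e1]; linear_combination (- q * e' ^ 2 * h') * hq
      rw [e2, hl']
      linear_combination (- q * e' * j') * hk' + (- e' ^ 2 * l' - e' * k' * j') * hq
    let B := integralClosure ℤ_[p] K
    have hB : IsIntegral B (q * (e' * g')) := by
      let b1 : B := ⟨j', hint j⟩
      let b0 : B := ⟨e' * k' * j' + e' ^ 2 * l', by
        have h9 := hint (e * k * j + e ^ 2 * l)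
        simp only [map_add, map_mul, map_pow] at h9
        exact h9⟩
      refine ⟨X ^ 2 + C b1 * X + C b0, by monicity!, ?_⟩
      simp only [eval₂_add, eval₂_mul, eval₂_pow, eval₂_X, eval₂_C]
      exact hrel
    exact isIntegral_trans _ hB
  obtain ⟨P, hP⟩ := hmax _ hα
  have hz : aeval θ (e * g - (p : ℤ_[p][X]) * (P %ₘ f)) = 0 := by
    have h1 : aeval θ (P %ₘ f) = aeval θ P := by
      have := congrArg (aeval θ) (modByMonic_add_div P f)
      simpa [hθ] using this
    simp only [map_sub, map_mul, map_natCast, h1, ← hP]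
    linear_combination (- (e' * g')) * hq
  rw [hker] at hz
  have hdf : f.degree = (2 * g.natDegree : ℕ) := by
    rw [degree_eq_natDegree hf.ne_zero, hdeg]
  have hz0 : e * g - (p : ℤ_[p][X]) * (P %ₘ f) = 0 := by
    apply Polynomial.eq_zero_of_dvd_of_degree_lt hz
    refine lt_of_le_of_lt (degree_sub_le _ _) (max_lt ?_ ?_)
    · rw [degree_eq_natDegree (hem.mul hg).ne_zero, hem.natDegree_mul hg, hdf]
      exact_mod_cast (by omega)
    · refine lt_of_le_of_lt ?_ (degree_modByMonic_lt P hf)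
      have h8 : (p : ℤ_[p][X]) * (P %ₘ f) = (p : ℤ_[p]) • (P %ₘ f) := by
        rw [smul_eq_C_mul]; simp
      rw [h8]
      exact degree_smul_le _ _
  have h5 := congrArg (Polynomial.map (PadicInt.toZMod : ℤ_[p] →+* ZMod p)) (sub_eq_zero.1 hz0)
  rw [Polynomial.map_mul, Polynomial.map_mul] at h5
  have : ((e.map (PadicInt.toZMod : ℤ_[p] →+* ZMod p)) * g.map PadicInt.toZMod) ≠ 0 :=
    ((hem.map _).mul (hg.map _)).ne_zero
  apply this
  rw [h5]
  simp
end dede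
section count
variable {F : Type*} [Field F] [Fintype F]

/-- monic polynomials of degree `m` -/
def MonD (F : Type*) [Field F] (m : ℕ) : Set F[X] := {P | P.Monic ∧ P.natDegree = m}
/-- polynomials of degree less than `n` -/
def DegL (F : Type*) [Field F] (n : ℕ) : Set F[X] := {P | P.degree < n}
/-- coprime pairs -/
def Cop (F : Type*) [Field F] (m n : ℕ) : Set (F[X] × F[X]) :=
  {x | x.1 ∈ MonD F m ∧ x.2 ∈ DegL F n ∧ IsCoprime x.1 x.2}

def degLEquiv (n : ℕ) : DegL F n ≃ (Fin n → F) :=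
  (Equiv.subtypeEquivRight (fun P => by rw [Polynomial.mem_degreeLT]; rfl)).trans
    (degreeLTEquiv F n).toEquiv

def monDEquiv (m : ℕ) : MonD F m ≃ (Fin m → F) :=
  (monicEquivDegreeLT (R := F) m).trans (degreeLTEquiv F m).toEquiv

instance (n : ℕ) : Finite (DegL F n) := Finite.of_equiv _ (degLEquiv n).symm
instance (n : ℕ) : Finite (MonD F n) := Finite.of_equiv _ (monDEquiv n).symm

lemma card_DegL (n : ℕ) : Nat.card (DegL F n) = Nat.card F ^ n := by
  rw [Nat.card_congr (degLEquiv n)]; simp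

lemma card_MonD (n : ℕ) : Nat.card (MonD F n) = Nat.card F ^ n := by
  rw [Nat.card_congr (monDEquiv n)]; simp

instance (m n : ℕ) : Finite (Cop F m n) := by
  have : (MonD F m ×ˢ DegL F n).Finite := (Set.toFinite _).prod (Set.toFinite _)
  exact this.subset (fun x hx => ⟨hx.1, hx.2.1⟩)

lemma pair_decomp (m k : ℕ) :
    Function.Bijective (fun x : (Σ d : Fin (m + 1), MonD F d × Cop F (m - d) (m - d + k)) =>
      ((⟨x.2.1.1 * x.2.2.1.1, by
          obtain ⟨⟨d, hd⟩, ⟨D, hD⟩, ⟨⟨G, h⟩, hG, hh, hc⟩⟩ := x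
          refine ⟨hD.1.mul hG.1, ?_⟩
          have h1 := hD.2
          have h2 := hG.2
          simp only at h1 h2 ⊢
          rw [hD.1.natDegree_mul hG.1, h1, h2]
          omega⟩, ⟨x.2.1.1 * x.2.2.1.2, by
          obtain ⟨⟨d, hd⟩, ⟨D, hD⟩, ⟨⟨G, h⟩, hG, hh, hc⟩⟩ := x
          have h1 := hD.2
          simp only [DegL, Set.mem_ofPred_eq] at h1 hh ⊢
          by_cases h0 : h = 0
          · simp [h0]
          · rw [degree_eq_natDegree (mul_ne_zero hD.1.ne_zero h0), hD.1.natDegree_mul' h0, h1]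
            rw [degree_eq_natDegree h0] at hh
            norm_cast at hh ⊢
            omega⟩) : MonD F m × DegL F (m + k))) := by
  constructor
  · rintro ⟨⟨d, hd⟩, ⟨D, hD⟩, ⟨⟨G, h⟩, hG, hh, hc⟩⟩ ⟨⟨d', hd'⟩, ⟨D', hD'⟩, ⟨⟨G', h'⟩, hG', hh', hc'⟩⟩ he
    simp only [Prod.mk.injEq, Subtype.mk.injEq] at he
    obtain ⟨h1, h2⟩ := he
    have key : ∀ {D D' G h G' h' : F[X]}, IsCoprime G h → D * G = D' * G' → D * h = D' * h' →
        D' ∣ D := by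
      intro D D' G h G' h' hc h1 h2
      obtain ⟨a, b, hab⟩ := hc
      refine ⟨a * G' + b * h', ?_⟩
      linear_combination a * h1 + b * h2 - D * hab
    have hDD : D = D' := by
      apply Polynomial.eq_of_monic_of_associated hD.1 hD'.1
      exact associated_of_dvd_dvd (key hc' h1.symm h2.symm) (key hc h1 h2)
    subst hDD
    have hdd : d = d' := by exact hD.2.symm.trans hD'.2
    subst hdd
    have := mul_left_cancel₀ hD.1.ne_zero h1
    have := mul_left_cancel₀ hD.1.ne_zero h2
    simp_all
  · rintro ⟨⟨G, hG⟩, ⟨h, hh⟩⟩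
    have hne : EuclideanDomain.gcd G h ≠ 0 := by
      intro h0
      exact hG.1.ne_zero (EuclideanDomain.gcd_eq_zero_iff.1 h0).1
    set D := normalize (EuclideanDomain.gcd G h) with hD
    have hDm : D.Monic := monic_normalize hne
    obtain ⟨E, hE⟩ : D ∣ G := normalize_dvd_iff.2 (EuclideanDomain.gcd_dvd_left _ _)
    obtain ⟨J, hJ⟩ : D ∣ h := normalize_dvd_iff.2 (EuclideanDomain.gcd_dvd_right _ _)
    have hEm : E.Monic := hDm.of_mul_monic_left (hE ▸ hG.1)
    have hdeg : D.natDegree + E.natDegree = m := by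
      rw [← hDm.natDegree_mul hEm, ← hE, hG.2]
    have hco : IsCoprime E J := by
      have h1 : D ∣ D * (EuclideanDomain.gcd E J) := by simp
      have h2 : D * (EuclideanDomain.gcd E J) ∣ D := by
        rw [hD, dvd_normalize_iff, ← hD]
        apply EuclideanDomain.dvd_gcd
        · conv_rhs => rw [hE]
          exact mul_dvd_mul_left _ (EuclideanDomain.gcd_dvd_left _ _)
        · conv_rhs => rw [hJ]
          exact mul_dvd_mul_left _ (EuclideanDomain.gcd_dvd_right _ _)
      rw [← EuclideanDomain.gcd_isUnit_iff]
      apply isUnit_of_dvd_one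
      have h3 : D * (EuclideanDomain.gcd E J) ∣ D * 1 := by simpa using h2
      exact (mul_dvd_mul_iff_left hDm.ne_zero).1 h3
    refine ⟨⟨⟨D.natDegree, by omega⟩, ⟨D, hDm, rfl⟩, ⟨⟨E, J⟩, ⟨hEm, ?_⟩, ?_, hco⟩⟩, ?_⟩
    · simp only; omega
    · simp only [DegL, Set.mem_ofPred_eq] at hh ⊢
      by_cases h0 : J = 0
      · simp only [h0, degree_zero]; exact WithBot.bot_lt_coe _
      · rw [hJ, degree_eq_natDegree (mul_ne_zero hDm.ne_zero h0), hDm.natDegree_mul' h0] at hh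
        rw [degree_eq_natDegree h0]
        norm_cast at hh ⊢
        omega
    · ext1 <;> ext1
      · exact hE.symm
      · exact hJ.symm

lemma sum_cop (m k : ℕ) :
    Nat.card F ^ (m + (m + k)) =
      ∑ d ∈ Finset.range (m + 1), Nat.card F ^ d * Nat.card (Cop F (m - d) (m - d + k)) := by
  have h := Nat.card_congr (Equiv.ofBijective _ (pair_decomp (F := F) m k))
  rw [Nat.card_prod, card_MonD, card_DegL, ← pow_add, Nat.card_sigma] at h
  rw [← h, ← Fin.sum_univ_eq_sum_range (fun d => Nat.card F ^ d * Nat.card (Cop F (m - d) (m - d + k)))]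
  refine Finset.sum_congr rfl fun d _ => ?_
  rw [Nat.card_prod, card_MonD]

lemma card_cop (m k : ℕ) :
    Nat.card (Cop F (m + 1) (m + 1 + k)) + Nat.card F * Nat.card F ^ (m + (m + k)) =
      Nat.card F ^ (m + 1 + (m + 1 + k)) := by
  have h1 := sum_cop (F := F) (m + 1) k
  have h2 := sum_cop (F := F) m k
  rw [Finset.sum_range_succ'] at h1
  rw [h1, h2, Finset.mul_sum, add_comm]
  simp only [pow_zero, one_mul, Nat.sub_zero]
  congr 1
  refine Finset.sum_congr rfl fun d _ => ?_
  rw [Nat.add_sub_add_right, pow_succ]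
  ring

end count

section glue

/-- The polynomial with descending coefficients `c`. -/
def dpoly {R : Type*} [CommRing R] (n : ℕ) (c : ℕ → R) : R[X] :=
  ∑ i ∈ Finset.range (n + 1), Polynomial.C (c i) * Polynomial.X ^ (n - i)

lemma dpoly_coeff {R : Type*} [CommRing R] (n : ℕ) (c : ℕ → R) (j : ℕ) :
    (dpoly n c).coeff j = if j ≤ n then c (n - j) else 0 := by
  unfold dpoly
  simp only [finsetSum_coeff, coeff_C_mul_X_pow]
  split_ifs with h
  · rw [Finset.sum_eq_single (n - j)]
    · rw [if_pos (by omega)]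
    · intro b hb hne
      have := Finset.mem_range.1 hb
      rw [if_neg (by omega)]
    · intro hb
      exact absurd (Finset.mem_range.2 (by omega)) hb
  · apply Finset.sum_eq_zero
    intro b hb
    rw [if_neg (by omega)]

lemma dpoly_degree_le {R : Type*} [CommRing R] (n : ℕ) (c : ℕ → R) :
    (dpoly n c).natDegree ≤ n := by
  rw [natDegree_le_iff_coeff_eq_zero]
  intro N hN
  rw [dpoly_coeff, if_neg (by omega)]

lemma dpoly_monic {R : Type*} [CommRing R] (n : ℕ) (c : ℕ → R) (hc : c 0 = 1) :
    (dpoly n c).Monic := by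
  apply monic_of_natDegree_le_of_coeff_eq_one n (dpoly_degree_le n c)
  rw [dpoly_coeff]; simp [hc]

lemma dpoly_natDegree {R : Type*} [CommRing R] [Nontrivial R] (n : ℕ) (c : ℕ → R) (hc : c 0 = 1) :
    (dpoly n c).natDegree = n := by
  apply le_antisymm (dpoly_degree_le n c)
  apply le_natDegree_of_ne_zero
  rw [dpoly_coeff]; simp [hc]

lemma dpoly_map {R S : Type*} [CommRing R] [CommRing S] (φ : R →+* S) (n : ℕ) (c : ℕ → R) :
    (dpoly n c).map φ = dpoly n (fun i => φ (c i)) := by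
  simp [dpoly, Polynomial.map_sum]

variable {p : ℕ} [Fact p.Prime]

lemma binPoly_eq (n : ℕ) (c : ℕ → ℤ_[p]) :
    binPoly ℤ_[p] ℚ_[p] n c = (dpoly n c).map (algebraMap ℤ_[p] ℚ_[p]) := by
  rw [dpoly_map]; rfl

lemma redForm_eq (n : ℕ) (c : ℕ → ℤ_[p]) :
    redForm p n c = ((dpoly n c).map PadicInt.toZMod).homogenize n := by
  rw [dpoly_map, redForm, dpoly, homogenize_finsetSum]
  refine Finset.sum_congr rfl fun i hi => ?_
  have := Finset.mem_range.1 hi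
  rw [homogenize_C_mul, homogenize_X_pow (by omega), Nat.sub_sub_self (by omega), mul_assoc]

lemma aeval_root (n : ℕ) (c : ℕ → ℤ_[p]) (P : ℤ_[p][X]) :
    aeval (θF ℤ_[p] ℚ_[p] n c) P =
      AdjoinRoot.mk (binPoly ℤ_[p] ℚ_[p] n c) (P.map (algebraMap ℤ_[p] ℚ_[p])) := by
  rw [← AdjoinRoot.aeval_eq, aeval_map_algebraMap]; rfl

lemma aeval_ker (n : ℕ) (c : ℕ → ℤ_[p]) (hc : c 0 = 1) (P : ℤ_[p][X]) :
    aeval (θF ℤ_[p] ℚ_[p] n c) P = 0 ↔ dpoly n c ∣ P := by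
  rw [aeval_root, AdjoinRoot.mk_eq_zero, binPoly_eq]
  exact Polynomial.map_dvd_map _ (IsFractionRing.injective ℤ_[p] ℚ_[p]) (dpoly_monic n c hc)

lemma p_unit (n : ℕ) (c : ℕ → ℤ_[p]) : IsUnit ((p : KF ℤ_[p] ℚ_[p] n c)) := by
  have h : IsUnit (p : ℚ_[p]) := by
    rw [isUnit_iff_ne_zero]
    exact_mod_cast (Fact.out : p.Prime).ne_zero
  simpa using h.map (algebraMap ℚ_[p] (KF ℤ_[p] ℚ_[p] n c))

lemma den_exists (n : ℕ) (c : ℕ → ℤ_[p]) (x : KF ℤ_[p] ℚ_[p] n c) :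
    ∃ k : ℕ, ∃ P : ℤ_[p][X],
      (p : KF ℤ_[p] ℚ_[p] n c) ^ k * x = aeval (θF ℤ_[p] ℚ_[p] n c) P := by
  obtain ⟨Q, rfl⟩ := AdjoinRoot.mk_surjective x
  obtain ⟨b, hbm, hb⟩ := IsLocalization.integerNormalization_spec (nonZeroDivisors ℤ_[p]) Q
  have hb0 : (b : ℤ_[p]) ≠ 0 := nonZeroDivisors.ne_zero hbm
  obtain ⟨k, u, hu⟩ : ∃ k : ℕ, ∃ u : ℤ_[p], u * (b : ℤ_[p]) = (p : ℤ_[p]) ^ k := by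
    refine ⟨(b : ℤ_[p]).valuation, ((PadicInt.unitCoeff hb0)⁻¹ : ℤ_[p]ˣ), ?_⟩
    rw [Units.inv_mul_eq_iff_eq_mul]
    exact PadicInt.unitCoeff_spec hb0
  refine ⟨k, C u * IsLocalization.integerNormalization (nonZeroDivisors ℤ_[p]) Q, ?_⟩
  rw [aeval_root, Polynomial.map_mul, hb, Polynomial.map_C]
  have h1 : ((p : KF ℤ_[p] ℚ_[p] n c) ^ k) =
      AdjoinRoot.mk (binPoly ℤ_[p] ℚ_[p] n c) (C (algebraMap ℤ_[p] ℚ_[p] (u * b))) := by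
    rw [hu]; simp
  rw [h1, ← map_mul]
  congr 1
  rw [map_mul, map_mul, mul_assoc, Algebra.smul_def]
  rfl

lemma theta_mem (n : ℕ) (c : ℕ → ℤ_[p]) (hc : c 0 = 1) (i : ℕ) (hi : i < n) :
    θF ℤ_[p] ℚ_[p] n c ^ i ∈ RFmod ℤ_[p] ℚ_[p] n c := by
  induction i using Nat.strong_induction_on with
  | _ i ih =>
    rcases Nat.eq_zero_or_pos i with rfl | hpos
    · rw [pow_zero]; exact Submodule.subset_span (Or.inl rfl)
    · have h1 : ζF ℤ_[p] ℚ_[p] n c i ∈ RFmod ℤ_[p] ℚ_[p] n c :=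
        Submodule.subset_span (Or.inr ⟨i, hpos, by omega, rfl⟩)
      obtain ⟨i, rfl⟩ : ∃ k, i = k + 1 := ⟨i - 1, by omega⟩
      rw [ζF, Finset.sum_range_succ', hc, map_one, one_mul, Nat.sub_zero] at h1
      refine (Submodule.add_mem_iff_right _ ?_).1 h1
      refine Submodule.sum_mem _ fun j hj => ?_
      rw [← Algebra.smul_def]
      exact Submodule.smul_mem _ _ (ih _ (by have := Finset.mem_range.1 hj; omega) (by omega))

lemma RFmod_mem_iff (n : ℕ) (hn : 1 ≤ n) (c : ℕ → ℤ_[p]) (hc : c 0 = 1)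
    (x : KF ℤ_[p] ℚ_[p] n c) :
    x ∈ RFmod ℤ_[p] ℚ_[p] n c ↔ ∃ P : ℤ_[p][X], x = aeval (θF ℤ_[p] ℚ_[p] n c) P := by
  constructor
  · intro hx
    have hle : RFmod ℤ_[p] ℚ_[p] n c ≤
        LinearMap.range (aeval (R := ℤ_[p]) (θF ℤ_[p] ℚ_[p] n c)).toLinearMap := by
      refine Submodule.span_le.2 ?_
      rintro y (rfl | ⟨i, _, _, rfl⟩)
      · exact ⟨1, by simp⟩
      · refine ⟨∑ j ∈ Finset.range i, C (c j) * X ^ (i - j), ?_⟩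
        simp [ζF]
    obtain ⟨P, hP⟩ := hle hx
    exact ⟨P, hP.symm⟩
  · rintro ⟨P, rfl⟩
    have hm := dpoly_monic n c hc
    have h0 : aeval (θF ℤ_[p] ℚ_[p] n c) (dpoly n c) = 0 := (aeval_ker n c hc _).2 dvd_rfl
    have h1 : aeval (θF ℤ_[p] ℚ_[p] n c) P = aeval (θF ℤ_[p] ℚ_[p] n c) (P %ₘ dpoly n c) := by
      have := congrArg (aeval (θF ℤ_[p] ℚ_[p] n c)) (modByMonic_add_div P (dpoly n c))
      rw [map_add, map_mul, h0, zero_mul, add_zero] at this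
      exact this.symm
    have h2 : (P %ₘ dpoly n c).natDegree < n := by
      have := natDegree_modByMonic_lt P hm (by
        intro h
        have := dpoly_natDegree n c hc
        rw [h, natDegree_one] at this
        omega)
      rwa [dpoly_natDegree n c hc] at this
    rw [h1, aeval_eq_sum_range]
    refine Submodule.sum_mem _ fun i hi => Submodule.smul_mem _ _ (theta_mem n c hc i ?_)
    have := Finset.mem_range.1 hi
    omega

lemma isMaxOrder_iff (n : ℕ) (hn : 1 ≤ n) (c : ℕ → ℤ_[p]) (hc : c 0 = 1) :
    IsMaxOrder ℤ_[p] ℚ_[p] n c ↔ ∀ x : KF ℤ_[p] ℚ_[p] n c, IsIntegral ℤ_[p] x →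
      ∃ P : ℤ_[p][X], x = aeval (θF ℤ_[p] ℚ_[p] n c) P := by
  have hθ : θF ℤ_[p] ℚ_[p] n c ∈ integralClosure ℤ_[p] (KF ℤ_[p] ℚ_[p] n c) :=
    ⟨dpoly n c, dpoly_monic n c hc, (aeval_ker n c hc _).2 dvd_rfl⟩
  unfold IsMaxOrder
  constructor
  · intro h x hx
    rw [← RFmod_mem_iff n hn c hc, h]
    exact hx
  · intro h
    ext x
    rw [RFmod_mem_iff n hn c hc]
    constructor
    · rintro ⟨P, rfl⟩
      rw [aeval_eq_sum_range]
      exact Submodule.sum_mem _ fun i _ =>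
        Submodule.smul_mem _ _ (Subalgebra.pow_mem _ hθ _)
    · exact h x

lemma square_iff (m : ℕ) (c : ℕ → ℤ_[p]) (hc : c 0 = 1) :
    (∃ H : MvPolynomial (Fin 2) (ZMod p), redForm p (2 * m) c = H ^ 2) ↔
      ∃ G ∈ MonD (ZMod p) m, (dpoly (2 * m) c).map PadicInt.toZMod = G ^ 2 := by
  have hmon : ((dpoly (2 * m) c).map (PadicInt.toZMod : ℤ_[p] →+* ZMod p)).Monic :=
    (dpoly_monic _ c hc).map _
  have hdeg : ((dpoly (2 * m) c).map (PadicInt.toZMod : ℤ_[p] →+* ZMod p)).natDegree = 2 * m := by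
    rw [(dpoly_monic _ c hc).natDegree_map, dpoly_natDegree _ c hc]
  rw [redForm_eq]
  constructor
  · rintro ⟨H, hH⟩
    have h1 := congrArg (MvPolynomial.aeval ![(X : (ZMod p)[X]), 1]) hH
    rw [aeval_homogenize_X_one _ hdeg.le, map_pow] at h1
    set Q := MvPolynomial.aeval ![(X : (ZMod p)[X]), 1] H
    have hl : Q.leadingCoeff ^ 2 = 1 := by
      rw [← leadingCoeff_pow, ← h1]; exact hmon
    have hQd : Q.natDegree = m := by
      have := natDegree_pow Q 2
      rw [← h1, hdeg] at this
      omega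
    have hQ2 : (C Q.leadingCoeff * Q) ^ 2 = Q ^ 2 := by
      rw [mul_pow, ← C_pow, hl, C_1, one_mul]
    have hl0 : Q.leadingCoeff ≠ 0 := by
      intro h; rw [h] at hl; simp at hl
    refine ⟨C Q.leadingCoeff * Q, ⟨?_, ?_⟩, ?_⟩
    · rw [Monic, leadingCoeff_mul, leadingCoeff_C, ← pow_two, hl]
    · rw [natDegree_C_mul hl0, hQd]
    · rw [hQ2, h1]
  · rintro ⟨G, hG, h⟩
    refine ⟨G.homogenize m, ?_⟩
    rw [h, pow_two, pow_two, two_mul, homogenize_mul _ _ hG.2.le hG.2.le]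

/-- Measure of residue classes. -/
lemma haar_fiber (n : ℕ) (a : Fin n → ZMod (p ^ 2)) :
    MeasurableSet {v : Fin n → ℤ_[p] | ∀ i, PadicInt.toZModPow 2 (v i) = a i} ∧
    haarP p n {v : Fin n → ℤ_[p] | ∀ i, PadicInt.toZModPow 2 (v i) = a i} =
      ((p : ENNReal) ^ (2 * n))⁻¹ := by
  have : Fact (0 < p) := ⟨(Fact.out : p.Prime).pos⟩
  have : NeZero (p ^ 2) := ⟨pow_ne_zero _ (Fact.out : p.Prime).ne_zero⟩
  have hhaar : (haarP p n).IsAddHaarMeasure := by unfold haarP; infer_instance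
  set F : (Fin n → ZMod (p ^ 2)) → Set (Fin n → ℤ_[p]) :=
    fun a => {v | ∀ i, PadicInt.toZModPow 2 (v i) = a i} with hF
  have hclosed : ∀ a : ZMod (p ^ 2), IsClosed {x : ℤ_[p] | PadicInt.toZModPow 2 x = a} := by
    intro a
    obtain ⟨b, rfl⟩ := ZMod.ringHom_surjective (PadicInt.toZModPow (p := p) 2) a
    have : {x : ℤ_[p] | PadicInt.toZModPow 2 x = PadicInt.toZModPow 2 b} =
        Metric.closedBall b ((p : ℝ) ^ (-((2 : ℕ) : ℤ))) := by
      ext x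
      rw [Metric.mem_closedBall, dist_eq_norm, PadicInt.norm_le_pow_iff_mem_span_pow,
        ← PadicInt.ker_toZModPow, RingHom.mem_ker, map_sub, sub_eq_zero]
      rfl
    rw [this]
    exact Metric.isClosed_closedBall
  have hmeas : ∀ a, MeasurableSet (F a) := by
    intro a
    apply IsClosed.measurableSet
    simp only [hF, Set.ofPred_forall]
    refine isClosed_iInter fun i => ?_
    exact IsClosed.preimage (f := fun v : Fin n → ℤ_[p] => v i) (continuous_apply i) (hclosed (a i))
  refine ⟨hmeas a, ?_⟩
  have huniv : haarP p n Set.univ = 1 := by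
    unfold haarP
    exact Measure.addHaarMeasure_self
      (K₀ := ⟨⟨Set.univ, isCompact_univ⟩, by rw [interior_univ]; exact Set.univ_nonempty⟩)
  have htrans : ∀ a, haarP p n (F a) = haarP p n (F 0) := by
    intro a
    have hs : ∀ i, ∃ b : ℤ_[p], PadicInt.toZModPow 2 b = a i := fun i =>
      ZMod.ringHom_surjective _ _
    choose b hb using hs
    have : F a = (fun v => (-b) + v) ⁻¹' (F 0) := by
      ext v
      simp only [hF, Set.mem_ofPred_eq, Set.mem_preimage, Pi.add_apply, Pi.neg_apply, map_add,
        map_neg, hb, Pi.zero_apply]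
      refine forall_congr' fun i => ?_
      rw [neg_add_eq_zero, eq_comm]
    rw [this, measure_preimage_add]
  have hunion : (⋃ a, F a) = Set.univ := by
    ext v
    simp only [Set.mem_iUnion, Set.mem_univ, iff_true]
    exact ⟨fun i => PadicInt.toZModPow 2 (v i), fun i => rfl⟩
  have hdisj : Pairwise (Function.onFun Disjoint F) := by
    intro a b hab
    rw [Function.onFun, Set.disjoint_left]
    intro v hv hv'
    exact hab (funext fun i => (hv i).symm.trans (hv' i))
  have hsum := measure_iUnion (μ := haarP p n) hdisj hmeas
  rw [hunion, huniv, tsum_fintype] at hsum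
  simp only [htrans, Finset.sum_const, Finset.card_univ, nsmul_eq_mul] at hsum
  change haarP p n (F a) = _
  rw [htrans a]
  apply ENNReal.eq_inv_of_mul_eq_one_left
  rw [mul_comm, hsum]
  congr 1
  rw [Fintype.card_fun, ZMod.card, Fintype.card_fin, ← pow_mul]
  push_cast; rfl

lemma exists_good_lift (P : (ZMod p)[X]) : ∃ Q : ℤ_[p][X], Q.map PadicInt.toZMod = P ∧
    Q.degree = P.degree ∧ (P.Monic → Q.Monic) := by
  have hl := Polynomial.mem_lifts_of_surjective (toZMod_surj (p := p)) P
  by_cases h : P.Monic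
  · obtain ⟨Q, h1, h2, h3⟩ := Polynomial.lifts_and_degree_eq_and_monic hl h
    exact ⟨Q, h1, h2, fun _ => h3⟩
  · obtain ⟨Q, h1, h2⟩ := Polynomial.exists_degree_eq_of_mem_lifts hl
    exact ⟨Q, h1, h2, fun hmon => absurd hmon h⟩

/-- chosen lift -/
def lft (P : (ZMod p)[X]) : ℤ_[p][X] := (exists_good_lift P).choose
lemma lft_map (P : (ZMod p)[X]) : (lft P).map PadicInt.toZMod = P :=
  (exists_good_lift P).choose_spec.1
lemma lft_degree (P : (ZMod p)[X]) : (lft P).degree = P.degree :=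
  (exists_good_lift P).choose_spec.2.1
lemma lft_monic (P : (ZMod p)[X]) (h : P.Monic) : (lft P).Monic :=
  (exists_good_lift P).choose_spec.2.2 h

/-- base polynomial of a residue class -/
def bpoly (x : (ZMod p)[X] × (ZMod p)[X]) : ℤ_[p][X] :=
  lft x.1 ^ 2 + (p : ℤ_[p][X]) * lft x.2

lemma sq_deg (m : ℕ) (G : (ZMod p)[X]) (hG : G ∈ MonD (ZMod p) m) :
    (lft G ^ 2).Monic ∧ (lft G ^ 2).natDegree = 2 * m := by
  refine ⟨(lft_monic _ hG.1).pow 2, ?_⟩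
  rw [(lft_monic _ hG.1).natDegree_pow, natDegree_eq_of_degree_eq (lft_degree G), hG.2]

lemma bpoly_monic (m : ℕ) (x : (ZMod p)[X] × (ZMod p)[X]) (hx : x ∈ Cop (ZMod p) m (2 * m)) :
    (bpoly x).Monic ∧ (bpoly x).natDegree = 2 * m := by
  obtain ⟨h1, h2⟩ := sq_deg m x.1 hx.1
  have hlt : ((p : ℤ_[p][X]) * lft x.2).degree < (lft x.1 ^ 2).degree := by
    have h8 : (p : ℤ_[p][X]) * lft x.2 = (p : ℤ_[p]) • lft x.2 := by
      rw [smul_eq_C_mul]; simp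
    rw [h8, degree_eq_natDegree h1.ne_zero, h2]
    refine lt_of_le_of_lt (degree_smul_le _ _) ?_
    rw [lft_degree]
    exact hx.2.1
  refine ⟨h1.add_of_left hlt, ?_⟩
  rw [bpoly, natDegree_add_eq_left_of_degree_lt hlt, h2]

lemma v_eq (n : ℕ) (v : Fin n → ℤ_[p]) (i : Fin n) :
    v i = (dpoly n (consF0 p n 1 v)).coeff (n - 1 - i) := by
  have := i.2
  rw [dpoly_coeff, if_pos (by omega), consF0, if_neg (by omega), dif_pos (by omega)]
  congr 1
  ext
  simp only
  omega

/-- residue class -/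
def Ucl (n : ℕ) (x : (ZMod p)[X] × (ZMod p)[X]) : Set (Fin n → ℤ_[p]) :=
  {v | ∀ i, PadicInt.toZModPow 2 (v i) = PadicInt.toZModPow 2 ((bpoly x).coeff (n - 1 - i))}

lemma Ucl_mem (m : ℕ) (x : (ZMod p)[X] × (ZMod p)[X]) (hx : x ∈ Cop (ZMod p) m (2 * m))
    (v : Fin (2 * m) → ℤ_[p]) :
    v ∈ Ucl (2 * m) x ↔ ∃ w : ℤ_[p][X],
      dpoly (2 * m) (consF0 p (2 * m) 1 v) = bpoly x + (p : ℤ_[p][X]) ^ 2 * w := by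
  have hc0 : consF0 p (2 * m) 1 v 0 = 1 := rfl
  constructor
  · intro hv
    have : C ((p : ℤ_[p]) ^ 2) ∣ dpoly (2 * m) (consF0 p (2 * m) 1 v) - bpoly x := by
      rw [C_dvd_iff_dvd_coeff]
      intro j
      obtain ⟨hb1, hb2⟩ := bpoly_monic m x hx
      rw [coeff_sub]
      rcases lt_trichotomy j (2 * m) with hj | rfl | hj
      · have h1 := hv ⟨2 * m - 1 - j, by omega⟩
        rw [v_eq _ v] at h1
        simp only at h1
        rw [show 2 * m - 1 - (2 * m - 1 - j) = j by omega] at h1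
        rw [← sub_eq_zero, ← map_sub, ← RingHom.mem_ker, PadicInt.ker_toZModPow,
          Ideal.mem_span_singleton] at h1
        exact h1
      · have h1 := (dpoly_monic (2 * m) _ hc0).coeff_natDegree
        rw [dpoly_natDegree _ _ hc0] at h1
        have h2 := hb1.coeff_natDegree
        rw [hb2] at h2
        rw [h1, h2, sub_self]; exact dvd_zero _
      · rw [coeff_eq_zero_of_natDegree_lt (lt_of_le_of_lt (dpoly_degree_le _ _) hj),
          coeff_eq_zero_of_natDegree_lt (hb2 ▸ hj), sub_self]
        exact dvd_zero _
    obtain ⟨w, hw⟩ := this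
    refine ⟨w, ?_⟩
    rw [map_pow, map_natCast] at hw
    rw [← hw]; ring
  · rintro ⟨w, hw⟩ i
    have h1 : (p : ℤ_[p][X]) ^ 2 * w = C ((p : ℤ_[p]) ^ 2) * w := by simp
    rw [v_eq _ v, hw, h1, coeff_add, coeff_C_mul, map_add, map_mul]
    have : PadicInt.toZModPow 2 ((p : ℤ_[p]) ^ 2) = 0 := by
      rw [← RingHom.mem_ker, PadicInt.ker_toZModPow]
      exact Ideal.mem_span_singleton_self _
    rw [this, zero_mul, add_zero]

lemma Ucl_disj (m : ℕ) (x y : (ZMod p)[X] × (ZMod p)[X]) (hx : x ∈ Cop (ZMod p) m (2 * m))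
    (hy : y ∈ Cop (ZMod p) m (2 * m)) (v : Fin (2 * m) → ℤ_[p])
    (hvx : v ∈ Ucl (2 * m) x) (hvy : v ∈ Ucl (2 * m) y) : x = y := by
  obtain ⟨w, hw⟩ := (Ucl_mem m x hx v).1 hvx
  obtain ⟨w', hw'⟩ := (Ucl_mem m y hy v).1 hvy
  have he := hw.symm.trans hw'
  unfold bpoly at he
  have h1 := congrArg (Polynomial.map (PadicInt.toZMod : ℤ_[p] →+* ZMod p)) he
  simp only [Polynomial.map_add, Polynomial.map_mul, Polynomial.map_pow, lft_map,
    Polynomial.map_natCast, CharP.cast_eq_zero, zero_mul, add_zero, ne_eq, OfNat.ofNat_ne_zero,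
    not_false_eq_true, zero_pow] at h1
  have h2 : x.1 = y.1 := by
    rcases sq_eq_sq_iff_eq_or_eq_neg.1 h1 with h | h
    · exact h
    · have h3 := congrArg leadingCoeff h
      rw [leadingCoeff_neg, hx.1.1.leadingCoeff, hy.1.1.leadingCoeff] at h3
      rw [h, ← one_mul (y.1), ← neg_mul, ← C_1, ← C_neg, ← h3]
  rw [h2] at he
  have hp0 : (p : ℤ_[p][X]) ≠ 0 := by
    exact_mod_cast (Fact.out : p.Prime).ne_zero
  have h4 : lft x.2 + (p : ℤ_[p][X]) * w = lft y.2 + (p : ℤ_[p][X]) * w' := by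
    apply mul_left_cancel₀ hp0
    linear_combination he
  have h5 := congrArg (Polynomial.map (PadicInt.toZMod : ℤ_[p] →+* ZMod p)) h4
  simp only [Polynomial.map_add, Polynomial.map_mul, lft_map,
    Polynomial.map_natCast, CharP.cast_eq_zero, zero_mul, add_zero] at h5
  exact Prod.ext h2 h5

lemma event_iff (m : ℕ) (hm : 1 ≤ m) (v : Fin (2 * m) → ℤ_[p]) :
    (IsMaxOrder ℤ_[p] ℚ_[p] (2 * m) (consF0 p (2 * m) 1 v) ∧
        ∃ H : MvPolynomial (Fin 2) (ZMod p),
          redForm p (2 * m) (consF0 p (2 * m) 1 v) = H ^ 2) ↔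
      ∃ x ∈ Cop (ZMod p) m (2 * m), v ∈ Ucl (2 * m) x := by
  have hc0 : consF0 p (2 * m) 1 v 0 = 1 := rfl
  set c := consF0 p (2 * m) 1 v with hc
  have hfm := dpoly_monic (2 * m) c hc0
  have hfd := dpoly_natDegree (2 * m) c hc0
  rw [isMaxOrder_iff _ (by omega) c hc0, square_iff m c hc0]
  constructor
  · rintro ⟨hmax, G, hG, hGf⟩
    obtain ⟨h', hh'⟩ := exists_of_map_eq (dpoly (2 * m) c) (lft G ^ 2) (by
      rw [hGf, Polynomial.map_pow, lft_map])
    obtain ⟨hsm, hsd⟩ := sq_deg m G hG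
    have hcop := dedekind_mpr (θF ℤ_[p] ℚ_[p] (2 * m) c) (dpoly (2 * m) c) (lft G) h' hfm hh'
      (lft_monic G hG.1) (by rw [hfd, natDegree_eq_of_degree_eq (lft_degree G), hG.2])
      (aeval_ker _ c hc0) (p_unit _ c) hmax
    rw [lft_map] at hcop
    have hx : ((G, h'.map PadicInt.toZMod) : (ZMod p)[X] × (ZMod p)[X]) ∈ Cop (ZMod p) m (2 * m) := by
      refine ⟨hG, ?_, hcop⟩
      refine lt_of_le_of_lt degree_map_le ?_
      rw [degree_lt_iff_coeff_zero]
      intro j hj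
      have h1 := congrArg (fun P => coeff P j) hh'
      have h2 : (p : ℤ_[p][X]) * h' = C (p : ℤ_[p]) * h' := by simp
      simp only [h2, coeff_add, coeff_C_mul] at h1
      have h3 : (dpoly (2 * m) c).coeff j = (lft G ^ 2).coeff j := by
        rcases hj.eq_or_lt with rfl | hj
        · have h1 := hfm.coeff_natDegree
          rw [hfd] at h1
          have h2 := hsm.coeff_natDegree
          rw [hsd] at h2
          rw [h1, h2]
        · rw [coeff_eq_zero_of_natDegree_lt (by omega), coeff_eq_zero_of_natDegree_lt (by omega)]
      rw [h3] at h1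
      have hp0 : (p : ℤ_[p]) ≠ 0 := by exact_mod_cast (Fact.out : p.Prime).ne_zero
      have h4 : (p : ℤ_[p]) * h'.coeff j = 0 := by linear_combination -h1
      exact (mul_eq_zero.1 h4).resolve_left hp0
    refine ⟨_, hx, (Ucl_mem m _ hx v).2 ?_⟩
    obtain ⟨w, hw⟩ := exists_of_map_eq h' (lft (h'.map PadicInt.toZMod)) (by rw [lft_map])
    refine ⟨w, ?_⟩
    rw [← hc, hh', bpoly]
    simp only
    linear_combination (p : ℤ_[p][X]) * hw
  · rintro ⟨⟨G, h⟩, hx, hv⟩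
    obtain ⟨w, hw⟩ := (Ucl_mem m _ hx v).1 hv
    rw [← hc, bpoly] at hw
    simp only at hw
    have hfg : dpoly (2 * m) c = lft G ^ 2 + (p : ℤ_[p][X]) * (lft h + (p : ℤ_[p][X]) * w) := by
      rw [hw]; ring
    have hm1 : (lft h + (p : ℤ_[p][X]) * w).map (PadicInt.toZMod : ℤ_[p] →+* ZMod p) = h := by
      simp [lft_map]
    refine ⟨?_, G, hx.1, ?_⟩
    · apply dedekind_mp (θF ℤ_[p] ℚ_[p] (2 * m) c) (dpoly (2 * m) c) (lft G) _ hfm hfg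
        (by rw [lft_map]; exact hx.1.1.ne_zero) (aeval_ker _ c hc0) (p_unit _ c)
        (den_exists _ c)
      rw [lft_map, hm1]
      exact hx.2.2
    · rw [hfg]
      simp [lft_map]

end glue

/-- Proposition 3.7: the density of monic binary forms of degree `2m`
over `ℤ_p` that cut out the maximal order and whose reduction modulo `p` is a perfect
square equals `p^{-m}(1 - p^{-1})`. -/
theorem monic_maximal_square_density
    (p : ℕ) [Fact p.Prime] (m : ℕ) (hm : 1 ≤ m) :
    (haarP p (2 * m) {v : Fin (2 * m) → ℤ_[p] |
        IsMaxOrder ℤ_[p] ℚ_[p] (2 * m) (consF0 p (2 * m) 1 v) ∧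
        ∃ H : MvPolynomial (Fin 2) (ZMod p),
          redForm p (2 * m) (consF0 p (2 * m) 1 v) = H ^ 2}).toReal =
      ((p : ℝ) ^ m)⁻¹ * (1 - (p : ℝ)⁻¹) := by
  have hset : {v : Fin (2 * m) → ℤ_[p] |
        IsMaxOrder ℤ_[p] ℚ_[p] (2 * m) (consF0 p (2 * m) 1 v) ∧
        ∃ H : MvPolynomial (Fin 2) (ZMod p),
          redForm p (2 * m) (consF0 p (2 * m) 1 v) = H ^ 2} =
      ⋃ x ∈ (Set.toFinite (Cop (ZMod p) m (2 * m))).toFinset, Ucl (2 * m) x := by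
    ext v
    simp only [Set.mem_iUnion, Set.Finite.mem_toFinset, exists_prop]
    exact event_iff m hm v
  have hmeas : haarP p (2 * m) (⋃ x ∈ (Set.toFinite (Cop (ZMod p) m (2 * m))).toFinset,
      Ucl (2 * m) x) =
      (Nat.card (Cop (ZMod p) m (2 * m)) : ENNReal) * ((p : ENNReal) ^ (2 * (2 * m)))⁻¹ := by
    rw [measure_biUnion_finset]
    · rw [Finset.sum_congr rfl (fun x _ => show haarP p (2 * m) (Ucl (2 * m) x) = _ from
        (haar_fiber (2 * m) _).2), Finset.sum_const,
        nsmul_eq_mul, ← Set.ncard_eq_toFinset_card (Cop (ZMod p) m (2 * m))]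
      rfl
    · intro x hx y hy hxy
      rw [Function.onFun, Set.disjoint_left]
      intro v hv hv'
      exact hxy (Ucl_disj m x y (by simpa using hx) (by simpa using hy) v hv hv')
    · intro x _
      exact (haar_fiber (2 * m) _).1
  rw [hset, hmeas]
  obtain ⟨k, rfl⟩ : ∃ k, m = k + 1 := ⟨m - 1, by omega⟩
  have hcard := card_cop (F := ZMod p) k (k + 1)
  rw [show k + 1 + (k + 1) = 2 * (k + 1) by ring, Nat.card_zmod] at hcard
  have hcardR : (Nat.card (Cop (ZMod p) (k + 1) (2 * (k + 1))) : ℝ) =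
      (p : ℝ) ^ (k + 1 + 2 * (k + 1)) - (p : ℝ) * (p : ℝ) ^ (k + (k + (k + 1))) := by
    rw [eq_sub_iff_add_eq]
    exact_mod_cast hcard
  have hp0 : (p : ℝ) ≠ 0 := by exact_mod_cast (Fact.out : p.Prime).ne_zero
  simp only [ENNReal.toReal_mul, ENNReal.toReal_inv, ENNReal.toReal_pow, ENNReal.toReal_natCast]
  rw [hcardR]
  field_simp
  ring


end BHS
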